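/- arXiv:1708.05218 — 3 statements merged into one kernel-verified Lean document; each statement's English description precedes it below -/
import Mathlib

section
/- Let X be a real Banach space with the Daugavet property. Then there exists a convex, closed, bounded set C ⊂ X which is almost SCD (aSCD) but not SCD. -/
open Bornology Set Pointwise

variable {X : Type*} [NormedAddCommGroup X] [NormedSpace ℝ X]

/-- The sliceSet of `A` given by the functional `f` and `ε > 0`. -/
noncomputable def sliceSet (A : Set X) (f : X →L[ℝ] ℝ) (ε : ℝ) : Set X :=
  {x ∈ A | sSup (f '' A) - ε < f x}

/-- `S` is a sliceSet of `A`: a nonempty set of the form `sliceSet A f ε` with `f ≠ 0`, `ε > 0`. -/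
def IsSlice (A S : Set X) : Prop :=
  S.Nonempty ∧ ∃ f : X →L[ℝ] ℝ, f ≠ 0 ∧ ∃ ε : ℝ, 0 < ε ∧ S = sliceSet A f ε

/-- A sequence of subsets of `A` is determining if every set `B` meeting all of them
has `A` inside the closed convex hull of `B`. -/
def Determining (A : Set X) (V : ℕ → Set X) : Prop :=
  ∀ B : Set X, (∀ n, (B ∩ V n).Nonempty) → A ⊆ closure (convexHull ℝ B)

/-- A bounded set is slicely countably determined if it has a determining sequence of slices. -/
def IsSCD (A : Set X) : Prop :=
  ∃ V : ℕ → Set X, (∀ n, IsSlice A (V n)) ∧ Determining A V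

/-- The Daugavet property: every rank-one operator `x ↦ f x • y` satisfies the
Daugavet equation `‖Id + T‖ = 1 + ‖T‖`. -/
def DaugavetProperty (X : Type*) [NormedAddCommGroup X] [NormedSpace ℝ X] : Prop :=
  ∀ (f : X →L[ℝ] ℝ) (y : X),
    ‖ContinuousLinearMap.id ℝ X + f.smulRight y‖ = 1 + ‖f.smulRight y‖


/-- A bounded set is almost SCD (aSCD) if it has a sequence of slices such that every set
meeting all of them has the whole set inside the closed absolutely convex hull. -/
def IsASCD {X : Type*} [NormedAddCommGroup X] [NormedSpace ℝ X] (A : Set X) : Prop :=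
  ∃ V : ℕ → Set X, (∀ n, IsSlice A (V n)) ∧
    ∀ B : Set X, (∀ n, (B ∩ V n).Nonempty) → A ⊆ closure (absConvexHull ℝ B)

/-!
Let `y`, `g` be a bounded biorthogonal system, `D = {d 0, d 1, …}` a countable subset of the ball
containing the `y n`, and `Q` the projection onto the hyperplane `g 0 = 1` along `y 0`. For `R`
large, let `E` consist of the points `Q (d n) ± R • y (n + 1)`, and let `C` be the closed convex
hull of `E ∪ -Q(D)`.

* The points of `E` are denting in `C`, strongly exposed by `± g (n + 1)`, and averaging opposite
  signs gives `Q(D)`. Hence `C` lies in the closed absolutely convex hull of `E`, and shrinking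
  slices around the points of `E` show that `C` is aSCD.
* By the Daugavet property, `D` can be chosen so that each of its points is a limit of convex
  combinations of points of `D` almost `ℓ₁`-orthogonal to any prescribed finite part of `D`. Given
  slices `V n` of `C`, pick `z n ∈ D` successively, almost `ℓ₁`-orthogonal to `y 0`, `y 1` and the
  earlier terms, such that `V n` meets `E` or contains `-Q (z n)`. Some functional `φ` vanishes at
  `y 0` and at all `z n` but not at `y 1`. As `g 0` is `1` on `E` and `-1` on `-Q(D)`, adding to `φ`
  a large multiple of `g 0` separates `-Q (y 1) ∈ C` from `E` and the points `-Q (z n)`.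
-/

/-! ### Closed convex hulls, slices and denting points -/

theorem isBounded_closedConvexHull {s : Set X} (hs : IsBounded s) :
    IsBounded (closedConvexHull ℝ s) := by
  rw [closedConvexHull_eq_closure_convexHull]
  exact (isBounded_convexHull.2 hs).closure

theorem map_mem_closedConvexHull {Y : Type*} [NormedAddCommGroup Y] [NormedSpace ℝ Y]
    (φ : X →ᴬ[ℝ] Y) {s : Set X} {x : X} (hx : x ∈ closedConvexHull ℝ s) :
    φ x ∈ closedConvexHull ℝ (φ '' s) := by
  have hs : s ⊆ φ ⁻¹' closedConvexHull ℝ (φ '' s) := fun y hy =>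
    subset_closedConvexHull (mem_image_of_mem φ hy)
  exact closedConvexHull_min hs (convex_closedConvexHull.affine_preimage (φ : X →ᵃ[ℝ] Y))
    (isClosed_closedConvexHull.preimage φ.continuous) hx

theorem apply_le_of_mem_closedConvexHull {s : Set X} {f : X →L[ℝ] ℝ} {c : ℝ}
    (hs : ∀ x ∈ s, f x ≤ c) {x : X} (hx : x ∈ closedConvexHull ℝ s) : f x ≤ c :=
  closedConvexHull_min (t := {x | f x ≤ c}) hs (convex_halfSpace_le f.toLinearMap.isLinear c)
    (isClosed_le f.continuous continuous_const) hx

theorem exists_finset_dist_lt_of_mem_closedConvexHull {s : Set X} {x : X}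
    (hx : x ∈ closedConvexHull ℝ s) {ε : ℝ} (hε : 0 < ε) :
    ∃ t : Finset X, (t : Set X) ⊆ s ∧ ∃ b ∈ convexHull ℝ (t : Set X), dist x b < ε := by
  rw [closedConvexHull_eq_closure_convexHull] at hx
  obtain ⟨b, hb, hxb⟩ := Metric.mem_closure_iff.1 hx ε hε
  rw [convexHull_eq_union_convexHull_finite_subsets] at hb
  obtain ⟨t, hts, hbt⟩ := mem_iUnion₂.1 hb
  exact ⟨t, hts, b, hbt, hxb⟩

theorem exists_countable_subset_mem_closedConvexHull {s : Set X} {x : X}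
    (hx : x ∈ closedConvexHull ℝ s) : ∃ t ⊆ s, t.Countable ∧ x ∈ closedConvexHull ℝ t := by
  choose t hts b hbt hxb using fun n : ℕ =>
    exists_finset_dist_lt_of_mem_closedConvexHull hx (Nat.one_div_pos_of_nat (α := ℝ) (n := n))
  refine ⟨⋃ n, (t n : Set X), iUnion_subset hts,
    countable_iUnion fun n => (t n).countable_toSet, ?_⟩
  rw [closedConvexHull_eq_closure_convexHull, Metric.mem_closure_iff]
  intro ε hε
  obtain ⟨n, hn⟩ := exists_nat_one_div_lt hε
  exact ⟨b n, convexHull_mono (subset_iUnion (fun n => (t n : Set X)) n) (hbt n),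
    (hxb n).trans hn⟩

theorem IsSlice.inter_nonempty_of_inter_closedConvexHull {C S T : Set X} (hS : IsSlice C S)
    (hTC : T ⊆ C) (h : (closedConvexHull ℝ T ∩ S).Nonempty) : (T ∩ S).Nonempty := by
  obtain ⟨-, f, -, ε, -, rfl⟩ := hS
  obtain ⟨x, hxT, -, hfx⟩ := h
  by_contra hTS
  refine hfx.not_ge (apply_le_of_mem_closedConvexHull (fun y hy => ?_) hxT)
  exact not_lt.1 fun hfy => hTS ⟨y, hy, hTC hy, hfy⟩

/-- A denting point of `C`: slices of `C` containing `e` of arbitrarily small size exist. -/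
def IsDentingPoint (C : Set X) (e : X) : Prop :=
  ∀ ε > 0, ∃ S, IsSlice C S ∧ e ∈ S ∧ S ⊆ Metric.ball e ε

theorem convex_setOf_norm_sub_le (G : X →L[ℝ] ℝ) (e : X) (K : ℝ) :
    Convex ℝ {x | ‖x - e‖ ≤ K * (G e - G x)} := by
  have hnorm : ConvexOn ℝ univ fun x => ‖x - e‖ := by
    simpa only [dist_eq_norm] using convexOn_univ_dist e
  have hlin : ConvexOn ℝ univ fun x => (K • G) x :=
    (K • G).toLinearMap.convexOn convex_univ
  convert (hnorm.add hlin).convex_le (K * G e) using 1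
  ext x
  simp [mul_sub, le_sub_iff_add_le]

theorem isDentingPoint_closedConvexHull_of_norm_sub_le {A : Set X} {e : X} {G : X →L[ℝ] ℝ} {K : ℝ}
    (he : e ∈ A) (hG : G ≠ 0) (hK : 0 < K) (hA : ∀ x ∈ A, ‖x - e‖ ≤ K * (G e - G x)) :
    IsDentingPoint (closedConvexHull ℝ A) e := by
  have hC : ∀ x ∈ closedConvexHull ℝ A, ‖x - e‖ ≤ K * (G e - G x) :=
    closedConvexHull_min (t := {x | ‖x - e‖ ≤ K * (G e - G x)}) hA
      (convex_setOf_norm_sub_le G e K) (isClosed_le (by fun_prop) (by fun_prop))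
  have heC : e ∈ closedConvexHull ℝ A := subset_closedConvexHull he
  have hmax : IsGreatest (G '' closedConvexHull ℝ A) (G e) := by
    refine ⟨mem_image_of_mem G heC, forall_mem_image.2 fun x hx => ?_⟩
    exact sub_nonneg.1 (nonneg_of_mul_nonneg_right ((norm_nonneg _).trans (hC x hx)) hK)
  intro ε hε
  have heS : e ∈ sliceSet (closedConvexHull ℝ A) G (ε / K) :=
    ⟨heC, by rw [hmax.csSup_eq]; linarith [div_pos hε hK]⟩
  refine ⟨_, ⟨⟨e, heS⟩, G, hG, ε / K, div_pos hε hK, rfl⟩, heS, ?_⟩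
  rintro x ⟨hxC, hGx⟩
  rw [hmax.csSup_eq, sub_lt_comm] at hGx
  rw [mem_ball_iff_norm]
  calc ‖x - e‖ ≤ K * (G e - G x) := hC x hxC
    _ < ε := by rwa [mul_comm, ← lt_div_iff₀ hK]

theorem isDentingPoint_closedConvexHull_of_gap {A : Set X} {e : X} {G : X →L[ℝ] ℝ} {γ : ℝ}
    (hA : IsBounded A) (he : e ∈ A) (hG : G ≠ 0) (hγ : 0 < γ)
    (hgap : ∀ x ∈ A, x ≠ e → G x + γ ≤ G e) : IsDentingPoint (closedConvexHull ℝ A) e := by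
  obtain ⟨r, hr, hAr⟩ := hA.subset_closedBall_lt 0 e
  refine isDentingPoint_closedConvexHull_of_norm_sub_le he hG (div_pos hr hγ) fun x hx => ?_
  rcases eq_or_ne x e with rfl | hxe
  · simp
  · calc ‖x - e‖ ≤ r := mem_closedBall_iff_norm.1 (hAr hx)
      _ = r / γ * γ := (div_mul_cancel₀ r hγ.ne').symm
      _ ≤ r / γ * (G e - G x) := by
        gcongr
        linarith [hgap x hx hxe]

theorem isASCD_of_countable_isDentingPoint {C E : Set X} (hE : E.Countable) (hEne : E.Nonempty)
    (hdent : ∀ e ∈ E, IsDentingPoint C e) (hC : C ⊆ closedAbsConvexHull ℝ E) : IsASCD C := by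
  choose! S hS _ hSball using hdent
  obtain ⟨e, rfl⟩ := hE.exists_eq_range hEne
  obtain ⟨p, hp⟩ := exists_surjective_nat (ℕ × ℕ)
  have hpos (k : ℕ) : (0 : ℝ) < 1 / (k + 1) := Nat.one_div_pos_of_nat
  refine ⟨fun n => S (e (p n).1) (1 / ((p n).2 + 1)),
    fun n => hS _ (mem_range_self _) _ (hpos _), fun B hB => hC.trans ?_⟩
  have hEB : range e ⊆ closure B := by
    rintro _ ⟨i, rfl⟩
    refine Metric.mem_closure_iff.2 fun ε hε => ?_
    obtain ⟨k, hk⟩ := exists_nat_one_div_lt hε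
    obtain ⟨n, hn⟩ := hp (i, k)
    obtain ⟨b, hbB, hbS⟩ := hB n
    have hb := hSball _ (mem_range_self _) _ (hpos _) hbS
    rw [hn] at hb
    exact ⟨b, hbB, (Metric.mem_ball'.1 hb).trans hk⟩
  rw [← closedAbsConvexHull_eq_closure_absConvexHull]
  exact closedAbsConvexHull_min (hEB.trans closure_subset_closedAbsConvexHull)
    absConvex_convexClosedHull isClosed_closedAbsConvexHull

/-! ### Slices of the ball in a Daugavet space -/

/-- The open slice of the closed unit ball cut out by `c < f`. -/
def ballSlice (f : X →L[ℝ] ℝ) (c : ℝ) : Set X :=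
  {y | ‖y‖ ≤ 1 ∧ c < f y}

theorem apply_le_of_norm_le_one {f : X →L[ℝ] ℝ} {C : ℝ} (hf : ‖f‖ ≤ C) {y : X} (hy : ‖y‖ ≤ 1) :
    f y ≤ C :=
  (le_abs_self _).trans ((f.unit_le_opNorm y hy).trans hf)

theorem exists_ballSlice_subset_of_nonempty [Nontrivial X] {f : X →L[ℝ] ℝ} {c : ℝ}
    (hne : (ballSlice f c).Nonempty) :
    ∃ (g : X →L[ℝ] ℝ) (b : ℝ), ‖g‖ = 1 ∧ b < 1 ∧ ballSlice g b ⊆ ballSlice f c := by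
  obtain ⟨y, hy, hcy⟩ := hne
  rcases eq_or_ne f 0 with rfl | hf
  · obtain ⟨g, hg, -⟩ := exists_dual_vector' ℝ (0 : X)
    exact ⟨g, 0, hg, one_pos, fun z hz => ⟨hz.1, hcy⟩⟩
  · have hf' : 0 < ‖f‖ := norm_pos_iff.2 hf
    refine ⟨‖f‖⁻¹ • f, ‖f‖⁻¹ * c, norm_smul_inv_norm hf, ?_, fun z hz => ⟨hz.1, ?_⟩⟩
    · rw [inv_mul_lt_one₀ hf']
      exact hcy.trans_le (apply_le_of_norm_le_one le_rfl hy)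
    · exact lt_of_mul_lt_mul_left hz.2 (inv_nonneg.2 hf'.le)

namespace DaugavetProperty

theorem nontrivial (h : DaugavetProperty X) : Nontrivial X := by
  by_contra hX
  rw [not_nontrivial_iff_subsingleton] at hX
  have hid := h 0 0
  simp [Subsingleton.elim (ContinuousLinearMap.id ℝ X) 0] at hid

theorem exists_lt_norm_add_smul (h : DaugavetProperty X) {f : X →L[ℝ] ℝ} (hf : ‖f‖ = 1) {x : X}
    (hx : ‖x‖ = 1) {δ : ℝ} (hδ : 0 < δ) :
    ∃ z : X, ‖z‖ ≤ 1 ∧ 0 ≤ f z ∧ 2 - δ < ‖z + f z • x‖ := by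
  have hnorm : ‖ContinuousLinearMap.id ℝ X + f.smulRight x‖ = 2 := by
    rw [h, ContinuousLinearMap.norm_smulRight_apply, hf, hx]
    norm_num
  obtain ⟨z, hz, hzx⟩ : ∃ z : X, ‖z‖ < 1 ∧ 2 - δ < ‖z + f z • x‖ :=
    ContinuousLinearMap.exists_lt_apply_of_lt_opNorm _ (by rw [hnorm]; exact sub_lt_self 2 hδ)
  rcases le_total 0 (f z) with hfz | hfz
  · exact ⟨z, hz.le, hfz, hzx⟩
  · refine ⟨-z, by rw [norm_neg]; exact hz.le, by rwa [map_neg, neg_nonneg], ?_⟩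
    rwa [map_neg, neg_smul, ← neg_add, norm_neg]

theorem exists_almost_norming (h : DaugavetProperty X) {f : X →L[ℝ] ℝ} (hf : ‖f‖ = 1)
    {x : X} (hx : ‖x‖ = 1) {δ : ℝ} (hδ : 0 < δ) (hδ_le : δ ≤ 1) :
    ∃ (φ : X →L[ℝ] ℝ) (z : X), ‖φ‖ ≤ 1 ∧ ‖z‖ ≤ 1 ∧ 1 - δ < φ x ∧ 1 - δ < φ z ∧ 1 - δ < f z := by
  obtain ⟨z, hz, hfz, hzx⟩ := h.exists_lt_norm_add_smul hf hx hδ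
  obtain ⟨φ, hφ, hφz⟩ := exists_dual_vector'' ℝ (z + f z • x)
  have hsum : 2 - δ < φ z + f z * φ x := by
    rw [map_add, map_smul, smul_eq_mul] at hφz
    exact hzx.trans_eq hφz.symm
  have hφz_le : φ z ≤ 1 := apply_le_of_norm_le_one hφ hz
  have hfz_le : f z ≤ 1 := apply_le_of_norm_le_one hf.le hz
  have hφx_le : φ x ≤ 1 := apply_le_of_norm_le_one hφ hx.le
  exact ⟨φ, z, hφ, hz, by nlinarith, by nlinarith, by nlinarith⟩

theorem exists_ballSlice_subset (h : DaugavetProperty X) {f : X →L[ℝ] ℝ} {c : ℝ}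
    (hne : (ballSlice f c).Nonempty) {x : X} (hx : ‖x‖ = 1) {ε : ℝ} (hε : 0 < ε) :
    ∃ (g : X →L[ℝ] ℝ) (b : ℝ), (ballSlice g b).Nonempty ∧
      ballSlice g b ⊆ {y ∈ ballSlice f c | 2 - ε < ‖x + y‖} := by
  have := h.nontrivial
  obtain ⟨f₁, c₁, hf₁, hc₁, hsub⟩ := exists_ballSlice_subset_of_nonempty hne
  obtain ⟨δ, hδ, hδ_lt⟩ := exists_between
    (lt_min one_pos (lt_min (div_pos hε three_pos) (half_pos (sub_pos.2 hc₁))))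
  obtain ⟨hδ_one, hδε, hδc⟩ : δ < 1 ∧ δ < ε / 3 ∧ δ < (1 - c₁) / 2 := by
    simpa only [lt_min_iff] using hδ_lt
  obtain ⟨φ, z, hφ, hz, hφx, hφz, hfz⟩ := h.exists_almost_norming hf₁ hx hδ hδ_one.le
  refine ⟨φ + f₁, 2 - 2 * δ, ⟨z, hz, ?_⟩, ?_⟩
  · rw [add_apply]
    linarith
  rintro y ⟨hy, hsum⟩
  rw [add_apply] at hsum
  have hφy_le : φ y ≤ 1 := apply_le_of_norm_le_one hφ hy
  have hfy_le : f₁ y ≤ 1 := apply_le_of_norm_le_one hf₁.le hy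
  refine ⟨hsub ⟨hy, by linarith⟩, ?_⟩
  calc 2 - ε < φ x + φ y := by linarith
    _ = φ (x + y) := (map_add φ x y).symm
    _ ≤ ‖x + y‖ := (le_abs_self _).trans (by simpa using φ.le_of_opNorm_le hφ (x + y))

theorem exists_mem_ballSlice_forall_lt_norm_add (h : DaugavetProperty X) {s : Set X}
    (hs : s.Finite) (hs_norm : ∀ x ∈ s, ‖x‖ = 1) {f : X →L[ℝ] ℝ} {c : ℝ}
    (hne : (ballSlice f c).Nonempty) {ε : ℝ} (hε : 0 < ε) :
    ∃ y ∈ ballSlice f c, ∀ x ∈ s, 2 - ε < ‖x + y‖ := by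
  induction s, hs using Set.Finite.induction_on generalizing f c with
  | empty =>
    obtain ⟨y, hy⟩ := hne
    exact ⟨y, hy, fun x hx => hx.elim⟩
  | @insert a s _ _ ih =>
    rw [forall_mem_insert] at hs_norm
    obtain ⟨g, b, hgne, hsub⟩ := h.exists_ballSlice_subset hne hs_norm.1 hε
    obtain ⟨y, hy, hys⟩ := ih hs_norm.2 hgne
    exact ⟨y, (hsub hy).1, forall_mem_insert.2 ⟨(hsub hy).2, hys⟩⟩

theorem exists_mem_ballSlice_forall_sphere (h : DaugavetProperty X) (F : Submodule ℝ X)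
    [FiniteDimensional ℝ F] {f : X →L[ℝ] ℝ} {c : ℝ} (hne : (ballSlice f c).Nonempty)
    {ε : ℝ} (hε : 0 < ε) :
    ∃ y ∈ ballSlice f c, ∀ x ∈ F, ‖x‖ = 1 → 2 - ε ≤ ‖x + y‖ := by
  obtain ⟨s, hs, hsf, hcov⟩ :=
    (isCompact_sphere (0 : F) 1).finite_cover_balls (half_pos hε)
  have hs_norm : ∀ x ∈ ((↑) '' s : Set X), ‖x‖ = 1 :=
    forall_mem_image.2 fun x hx => mem_sphere_zero_iff_norm.1 (hs hx)
  obtain ⟨y, hy, hys⟩ :=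
    h.exists_mem_ballSlice_forall_lt_norm_add (hsf.image _) hs_norm hne (half_pos hε)
  refine ⟨y, hy, fun x hx hx_norm => ?_⟩
  obtain ⟨w, hw, hxw⟩ :=
    mem_iUnion₂.1 (hcov (mem_sphere_zero_iff_norm.2 hx_norm : (⟨x, hx⟩ : F) ∈ _))
  have hwx : ‖(w : X) - x‖ < ε / 2 := mem_ball_iff_norm'.1 hxw
  have hsplit : x + y + ((w : X) - x) = w + y := by abel
  have htri : ‖(w : X) + y‖ ≤ ‖x + y‖ + ‖(w : X) - x‖ := hsplit ▸ norm_add_le _ _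
  linarith [hys w (mem_image_of_mem _ hw)]

end DaugavetProperty

/-! ### Almost `ℓ₁`-orthogonality -/

/-- `y` is a vector of the unit ball spanning with `F` an `ℓ₁`-sum up to the factor `1 - ε`. -/
def AlmostL1Orthogonal (F : Submodule ℝ X) (ε : ℝ) (y : X) : Prop :=
  ‖y‖ ≤ 1 ∧ ∀ z ∈ F, ∀ c : ℝ, (1 - ε) * (‖z‖ + |c|) ≤ ‖z + c • y‖

theorem AlmostL1Orthogonal.mono {F F' : Submodule ℝ X} {ε ε' : ℝ} {y : X} (hF : F ≤ F')
    (hε : ε' ≤ ε) (hy : AlmostL1Orthogonal F' ε' y) : AlmostL1Orthogonal F ε y := by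
  refine ⟨hy.1, fun z hz c => le_trans ?_ (hy.2 z (hF hz) c)⟩
  gcongr

theorem one_sub_mul_add_le_norm_smul_add_smul {x y : X} {ε a c : ℝ} (hx : ‖x‖ ≤ 1) (hy : ‖y‖ ≤ 1)
    (hε : 0 ≤ ε) (hxy : 2 - ε ≤ ‖x + y‖) (ha : 0 ≤ a) (hc : 0 ≤ c) :
    (1 - ε) * (a + c) ≤ ‖a • x + c • y‖ := by
  wlog hac : a ≤ c generalizing x y a c
  · simpa only [add_comm] using this hy hx (by rwa [add_comm]) hc ha (le_of_not_ge hac)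
  have hsplit : c • (x + y) - (c - a) • x = a • x + c • y := by module
  calc (1 - ε) * (a + c) ≤ c * (2 - ε) - (c - a) * 1 := by nlinarith
    _ ≤ c * ‖x + y‖ - (c - a) * ‖x‖ := by gcongr
    _ = ‖c • (x + y)‖ - ‖(c - a) • x‖ := by
      rw [norm_smul_of_nonneg hc, norm_smul_of_nonneg (sub_nonneg.2 hac)]
    _ ≤ ‖a • x + c • y‖ := hsplit ▸ norm_sub_norm_le _ _

theorem almostL1Orthogonal_of_forall_sphere {F : Submodule ℝ X} (hF : F ≠ ⊥) {ε : ℝ} (hε : 0 ≤ ε)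
    {y : X} (hy : ‖y‖ ≤ 1) (hFy : ∀ x ∈ F, ‖x‖ = 1 → 2 - ε ≤ ‖x + y‖) :
    AlmostL1Orthogonal F ε y := by
  have hnonneg : ∀ z ∈ F, ∀ c : ℝ, 0 ≤ c → (1 - ε) * (‖z‖ + c) ≤ ‖z + c • y‖ := by
    intro z hz c hc
    obtain ⟨x, hxF, hx, hxz⟩ : ∃ x ∈ F, ‖x‖ = 1 ∧ ‖z‖ • x = z := by
      rcases eq_or_ne z 0 with rfl | hz0
      · obtain ⟨w, hwF, hw⟩ := Submodule.exists_mem_ne_zero_of_ne_bot hF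
        exact ⟨‖w‖⁻¹ • w, F.smul_mem _ hwF, norm_smul_inv_norm hw, by simp⟩
      · exact ⟨‖z‖⁻¹ • z, F.smul_mem _ hz, norm_smul_inv_norm hz0,
          smul_inv_smul₀ (norm_ne_zero_iff.2 hz0) z⟩
    simpa only [hxz] using
      one_sub_mul_add_le_norm_smul_add_smul hx.le hy hε (hFy x hxF hx) (norm_nonneg z) hc
  refine ⟨hy, fun z hz c => ?_⟩
  rcases le_total 0 c with hc | hc
  · simpa only [abs_of_nonneg hc] using hnonneg z hz c hc
  · have hneg := hnonneg (-z) (F.neg_mem hz) (-c) (neg_nonneg.2 hc)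
    rwa [norm_neg, neg_smul, ← neg_add, norm_neg, ← abs_of_nonpos hc] at hneg

theorem DaugavetProperty.exists_almostL1Orthogonal_mem_ballSlice (h : DaugavetProperty X)
    (F : Submodule ℝ X) [FiniteDimensional ℝ F] {f : X →L[ℝ] ℝ} {c : ℝ}
    (hne : (ballSlice f c).Nonempty) {ε : ℝ} (hε : 0 < ε) :
    ∃ y ∈ ballSlice f c, AlmostL1Orthogonal F ε y := by
  have := h.nontrivial
  obtain ⟨e, he⟩ := exists_ne (0 : X)
  have hbot : F ⊔ Submodule.span ℝ {e} ≠ ⊥ := by simp [he]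
  obtain ⟨y, hy, hFy⟩ := h.exists_mem_ballSlice_forall_sphere (F ⊔ Submodule.span ℝ {e}) hne hε
  exact ⟨y, hy, (almostL1Orthogonal_of_forall_sphere hbot hε.le hy.1 hFy).mono le_sup_left le_rfl⟩

theorem DaugavetProperty.mem_closedConvexHull_almostL1Orthogonal (h : DaugavetProperty X)
    (F : Submodule ℝ X) [FiniteDimensional ℝ F] {d : X} (hd : ‖d‖ ≤ 1) {ε : ℝ} (hε : 0 < ε) :
    d ∈ closedConvexHull ℝ {y | AlmostL1Orthogonal F ε y} := by
  by_contra hn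
  obtain ⟨f, c, hlt, hcd⟩ := geometric_hahn_banach_closed_point
    convex_closedConvexHull isClosed_closedConvexHull hn
  obtain ⟨y, hy, hFy⟩ := h.exists_almostL1Orthogonal_mem_ballSlice F ⟨d, hd, hcd⟩ hε
  exact (hlt y (subset_closedConvexHull hFy)).not_gt hy.2

/-! ### Almost `ℓ₁`-sequences -/

theorem exists_seq_forall_image_Iio {α : Type*} {P : ℕ → α → Set α → Prop}
    (h : ∀ n t, t.Finite → ∃ a, P n a t) : ∃ u : ℕ → α, ∀ n, P n (u n) (u '' Iio n) := by
  -- The index is recovered as the cardinality of the set of earlier terms, once each term is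
  -- paired with its index.
  obtain ⟨v, hv⟩ := seq_of_forall_finite_exists
    (P := fun (c : ℕ × α) t => c.1 = t.ncard ∧ P t.ncard c.2 (Prod.snd '' t)) fun t ht =>
      (h t.ncard _ (ht.image Prod.snd)).imp' (Prod.mk t.ncard) fun _ ha => ⟨rfl, ha⟩
  have hcard : ∀ n, (v '' Iio n).ncard = n := by
    intro n
    induction n using Nat.strong_induction_on with
    | h n ih =>
      have hinj : InjOn v (Iio n) := fun i hi j hj hij => by
        rw [← ih i hi, ← (hv i).1, hij, (hv j).1, ih j hj]
      rw [hinj.ncard_image, ncard_eq_toFinset_card', toFinset_Iio, Nat.card_Iio]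
  refine ⟨fun n => (v n).2, fun n => ?_⟩
  simpa only [hcard, image_image] using (hv n).2

/-- A sequence in the unit ball each of whose terms is almost `ℓ₁`-orthogonal to `s` together with
the earlier terms. The tolerances `1 / 2 / 2 / 2 ^ n` sum to `1 / 2`. -/
def IsAlmostL1Sequence (s : Set X) (y : ℕ → X) : Prop :=
  ∀ n, AlmostL1Orthogonal (Submodule.span ℝ (s ∪ y '' Iio n)) (1 / 2 / 2 / 2 ^ n) (y n)

theorem exists_isAlmostL1Sequence {D s : Set X} (hs : s.Finite) (hsD : s ⊆ D)
    {P : ℕ → X → Prop} (h : ∀ n, ∀ t ⊆ D, t.Finite → ∀ ε > 0,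
      ∃ y ∈ D, AlmostL1Orthogonal (Submodule.span ℝ t) ε y ∧ P n y) :
    ∃ y : ℕ → X, IsAlmostL1Sequence s y ∧ ∀ n, P n (y n) := by
  obtain ⟨u, hu⟩ := exists_seq_forall_image_Iio (P := fun n (a : D) t =>
      AlmostL1Orthogonal (Submodule.span ℝ (s ∪ (↑) '' t)) (1 / 2 / 2 / 2 ^ n) (a : X) ∧ P n a)
    fun n t ht => by
      obtain ⟨y, hyD, hy⟩ := h n (s ∪ (↑) '' t)
        (union_subset hsD (Subtype.coe_image_subset D t)) (hs.union (ht.image _))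
        (1 / 2 / 2 / 2 ^ n) (by positivity)
      exact ⟨⟨y, hyD⟩, hy⟩
  simp only [image_image] at hu
  exact ⟨fun n => u n, fun n => (hu n).1, fun n => (hu n).2⟩

theorem half_div_two_div_two_pow_le_quarter (n : ℕ) : (1 / 2 / 2 / 2 ^ n : ℝ) ≤ 1 / 4 :=
  (div_le_self (by norm_num) (one_le_pow₀ one_le_two)).trans_eq (by norm_num)

namespace IsAlmostL1Sequence

variable {s : Set X} {y : ℕ → X}

theorem one_sub_sum_mul_norm_le (hy : IsAlmostL1Sequence s y) {k : ℕ} {z : X}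
    (hz : z ∈ Submodule.span ℝ (s ∪ y '' Iio k)) {n : ℕ} (hkn : k ≤ n) {w : X}
    (hw : w ∈ Submodule.span ℝ (y '' Ico k n)) :
    (1 - ∑ i ∈ Finset.Ico k n, (1 / 2 / 2 / 2 ^ i : ℝ)) * ‖z‖ ≤ ‖z + w‖ := by
  induction n, hkn using Nat.le_induction generalizing w with
  | base =>
    obtain rfl : w = 0 := by simpa using hw
    simp
  | succ n hkn ih =>
    rw [← Order.succ_eq_add_one, ← insert_Ico_right_eq_Ico_succ hkn, image_insert_eq] at hw
    obtain ⟨c, w, hw', rfl⟩ := Submodule.mem_span_insert.1 hw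
    have hz_le : s ∪ y '' Iio k ⊆ s ∪ y '' Iio n :=
      union_subset_union_right s (image_mono (Iio_subset_Iio hkn))
    have hw_le : y '' Ico k n ⊆ s ∪ y '' Iio n :=
      (image_mono Ico_subset_Iio_self).trans subset_union_right
    have hstep := (hy n).2 (z + w)
      (Submodule.add_mem _ (Submodule.span_mono hz_le hz) (Submodule.span_mono hw_le hw')) c
    have hε := half_div_two_div_two_pow_le_quarter n
    have hε_nonneg : (0 : ℝ) ≤ 1 / 2 / 2 / 2 ^ n := by positivity
    have hsum : 0 ≤ ∑ i ∈ Finset.Ico k n, (1 / 2 / 2 / 2 ^ i : ℝ) := by positivity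
    rw [Finset.sum_Ico_succ_top hkn]
    set ε : ℝ := 1 / 2 / 2 / 2 ^ n
    set σ := ∑ i ∈ Finset.Ico k n, (1 / 2 / 2 / 2 ^ i : ℝ)
    calc (1 - (σ + ε)) * ‖z‖ ≤ (1 - ε) * ((1 - σ) * ‖z‖) := by
          nlinarith [mul_nonneg (mul_nonneg hε_nonneg hsum) (norm_nonneg z)]
      _ ≤ (1 - ε) * (‖z + w‖ + |c|) := by
          have := ih hw'
          have := abs_nonneg c
          gcongr
          · linarith
          · linarith
      _ ≤ ‖z + w + c • y n‖ := hstep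
      _ = ‖z + (c • y n + w)‖ := by congr 1; abel

theorem norm_le_two_mul_norm_add (hy : IsAlmostL1Sequence s y) {k : ℕ} {z w : X}
    (hz : z ∈ Submodule.span ℝ (s ∪ y '' Iio k)) (hw : w ∈ Submodule.span ℝ (y '' Ici k)) :
    ‖z‖ ≤ 2 * ‖z + w‖ := by
  have hmono : Monotone fun n => Submodule.span ℝ (y '' Ico k n) := fun m n hmn =>
    Submodule.span_mono (image_mono (Ico_subset_Ico_right hmn))
  obtain ⟨n, hkn, hwn⟩ : ∃ n, k ≤ n ∧ w ∈ Submodule.span ℝ (y '' Ico k n) := by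
    rw [← iUnion_Ico_right, image_iUnion, Submodule.span_iUnion,
      Submodule.mem_iSup_of_directed _ hmono.directed_le] at hw
    obtain ⟨n, hn⟩ := hw
    exact ⟨max k n, le_max_left k n, hmono (le_max_right k n) hn⟩
  have hsum : ∑ i ∈ Finset.Ico k n, (1 / 2 / 2 / 2 ^ i : ℝ) ≤ 1 / 2 :=
    sum_le_hasSum _ (fun _ _ => by positivity) (hasSum_geometric_two' (1 / 2))
  nlinarith [hy.one_sub_sum_mul_norm_le hz hkn hwn, norm_nonneg z]

end IsAlmostL1Sequence

theorem exists_dual_eq_one_of_forall_le_norm_add {M : Submodule ℝ X} {x : X} {δ : ℝ} (hδ : 0 < δ)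
    (hM : ∀ m ∈ M, δ ≤ ‖x + m‖) :
    ∃ g : X →L[ℝ] ℝ, g x = 1 ∧ (∀ m ∈ M, g m = 0) ∧ ‖g‖ ≤ δ⁻¹ := by
  have hq : δ ≤ ‖M.mkQL x‖ := by
    rw [show ‖M.mkQL x‖ = Metric.infDist x M from
      QuotientAddGroup.norm_mk (S := M.toAddSubgroup) x, Metric.le_infDist ⟨0, M.zero_mem⟩]
    intro m hm
    simpa only [dist_eq_norm, sub_eq_add_neg] using hM _ (M.neg_mem hm)
  have hpos : 0 < ‖M.mkQL x‖ := hδ.trans_le hq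
  obtain ⟨g, hg, hgx⟩ := exists_dual_vector ℝ (M.mkQL x) hpos.ne'
  refine ⟨‖M.mkQL x‖⁻¹ • g.comp M.mkQL, ?_, fun m hm => ?_, ?_⟩
  · change ‖M.mkQL x‖⁻¹ * g (M.mkQL x) = 1
    rw [hgx]
    exact inv_mul_cancel₀ hpos.ne'
  · simp [(Submodule.Quotient.mk_eq_zero M).2 hm]
  · have hcomp : ‖g.comp M.mkQL‖ ≤ 1 := by
      refine ContinuousLinearMap.opNorm_le_bound _ zero_le_one fun z => ?_
      calc ‖g (M.mkQL z)‖ ≤ 1 * ‖M.mkQL z‖ := g.le_of_opNorm_le hg.le _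
        _ ≤ 1 * ‖z‖ := by gcongr; exact Submodule.Quotient.norm_mk_le M z
    calc ‖‖M.mkQL x‖⁻¹ • g.comp M.mkQL‖ = ‖M.mkQL x‖⁻¹ * ‖g.comp M.mkQL‖ := by
          rw [norm_smul, norm_inv, norm_norm]
      _ ≤ δ⁻¹ * 1 := by gcongr
      _ = δ⁻¹ := mul_one _

theorem IsAlmostL1Sequence.exists_dual_eq_one {s : Set X} {y : ℕ → X}
    (hy : IsAlmostL1Sequence s y) {M : Submodule ℝ X} (hM : IsClosed (M : Set X))
    (hMs : M ≤ Submodule.span ℝ s) {x : X} (hxs : x ∈ Submodule.span ℝ s) (hxM : x ∉ M) :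
    ∃ φ : X →L[ℝ] ℝ, φ x = 1 ∧ (∀ m ∈ M, φ m = 0) ∧ ∀ n, φ (y n) = 0 := by
  have hdist : 0 < Metric.infDist x M := (hM.notMem_iff_infDist_pos ⟨0, M.zero_mem⟩).1 hxM
  have hbound : ∀ m ∈ M ⊔ Submodule.span ℝ (range y), Metric.infDist x M / 2 ≤ ‖x + m‖ := by
    intro m' hm'
    obtain ⟨m, hm, w, hw, rfl⟩ := Submodule.mem_sup.1 hm'
    have hxm : Metric.infDist x M ≤ ‖x + m‖ := by
      simpa [dist_eq_norm] using Metric.infDist_le_dist_of_mem (x := x) (M.neg_mem hm)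
    have hnorm := hy.norm_le_two_mul_norm_add (k := 0) (z := x + m) (w := w)
      (by simpa using add_mem hxs (hMs hm))
      (by rwa [show Ici 0 = (univ : Set ℕ) from Ici_bot, image_univ])
    rw [← add_assoc]
    linarith
  obtain ⟨φ, hφx, hφ, -⟩ := exists_dual_eq_one_of_forall_le_norm_add (half_pos hdist) hbound
  exact ⟨φ, hφx, fun m hm => hφ m (Submodule.mem_sup_left hm),
    fun n => hφ _ (Submodule.mem_sup_right (Submodule.subset_span (mem_range_self n)))⟩

/-! ### Bounded biorthogonal systems -/

/-- A biorthogonal system of vectors of the unit ball and functionals of norm at most `K`. -/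
structure IsBoundedBiorthogonal (K : ℝ) (y : ℕ → X) (g : ℕ → X →L[ℝ] ℝ) : Prop where
  norm_le_one : ∀ n, ‖y n‖ ≤ 1
  norm_dual_le : ∀ n, ‖g n‖ ≤ K
  apply_self : ∀ n, g n (y n) = 1
  apply_of_ne : ∀ ⦃n m⦄, n ≠ m → g n (y m) = 0

namespace IsBoundedBiorthogonal

variable {K : ℝ} {y : ℕ → X} {g : ℕ → X →L[ℝ] ℝ}

theorem isBounded_range_smul (hyg : IsBoundedBiorthogonal K y g) (R : ℝ) :
    IsBounded (range (R • y)) := by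
  have hy : IsBounded (range y) :=
    isBounded_iff_forall_norm_le.2 ⟨1, forall_mem_range.2 hyg.norm_le_one⟩
  exact range_smul R y ▸ hy.smul₀ R

theorem comp_injective (hyg : IsBoundedBiorthogonal K y g) {i : ℕ → ℕ}
    (hi : Function.Injective i) : IsBoundedBiorthogonal K (y ∘ i) (g ∘ i) where
  norm_le_one n := hyg.norm_le_one (i n)
  norm_dual_le n := hyg.norm_dual_le (i n)
  apply_self n := hyg.apply_self (i n)
  apply_of_ne _ _ hnm := hyg.apply_of_ne (hi.ne hnm)

theorem notMem_span_singleton (hyg : IsBoundedBiorthogonal K y g) {n m : ℕ} (hnm : n ≠ m) :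
    y n ∉ Submodule.span ℝ {y m} := by
  rw [Submodule.mem_span_singleton]
  rintro ⟨a, ha⟩
  simpa [hyg.apply_self, hyg.apply_of_ne hnm] using congrArg (g n) ha

end IsBoundedBiorthogonal

theorem IsAlmostL1Sequence.quarter_le_norm_add {s : Set X} {y : ℕ → X}
    (hy : IsAlmostL1Sequence s y) {n : ℕ} {m : X} (hm : m ∈ Submodule.span ℝ (y '' {n}ᶜ)) :
    1 / 4 ≤ ‖y n + m‖ := by
  rw [← Iio_union_Ioi, image_union, Submodule.span_union] at hm
  obtain ⟨z, hz, w, hw, rfl⟩ := Submodule.mem_sup.1 hm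
  have hz_span : z ∈ Submodule.span ℝ (s ∪ y '' Iio n) :=
    Submodule.span_mono subset_union_right hz
  have hzy_span : z + y n ∈ Submodule.span ℝ (s ∪ y '' Iio (n + 1)) := by
    have hsub : s ∪ y '' Iio n ⊆ s ∪ y '' Iio (n + 1) :=
      union_subset_union_right s (image_mono (Iio_subset_Iio n.le_succ))
    exact Submodule.add_mem _ (Submodule.span_mono hsub hz_span)
      (Submodule.subset_span (.inr (mem_image_of_mem y n.lt_succ_self)))
  have hzy : (1 - 1 / 2 / 2 / 2 ^ n) * (‖z‖ + 1) ≤ ‖z + y n‖ := by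
    simpa using (hy n).2 z hz_span 1
  have htail : ‖z + y n‖ ≤ 2 * ‖y n + (z + w)‖ := by
    rw [← add_assoc, add_comm (y n)]
    exact hy.norm_le_two_mul_norm_add hzy_span hw
  nlinarith [half_div_two_div_two_pow_le_quarter n, norm_nonneg z]

theorem DaugavetProperty.exists_isBoundedBiorthogonal (h : DaugavetProperty X) :
    ∃ (y : ℕ → X) (g : ℕ → X →L[ℝ] ℝ), IsBoundedBiorthogonal 4 y g := by
  obtain ⟨y, hy, -⟩ := exists_isAlmostL1Sequence (D := univ) (P := fun _ _ => True) finite_empty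
    (empty_subset (univ : Set X)) fun _ t _ ht ε hε => by
      have := FiniteDimensional.span_of_finite ℝ ht
      obtain ⟨y, -, hy⟩ := h.exists_almostL1Orthogonal_mem_ballSlice (Submodule.span ℝ t)
        (f := 0) (c := -1) ⟨0, by simp [ballSlice]⟩ hε
      exact ⟨y, mem_univ y, hy, trivial⟩
  choose g hg_self hg_span hg_norm using fun n =>
    exists_dual_eq_one_of_forall_le_norm_add (M := Submodule.span ℝ (y '' {n}ᶜ)) (x := y n)
      (by norm_num : (0 : ℝ) < 1 / 4) fun _ => hy.quarter_le_norm_add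
  refine ⟨y, g, fun n => (hy n).1, fun n => (hg_norm n).trans_eq (by norm_num), hg_self,
    fun n m hnm => hg_span n _ (Submodule.subset_span (mem_image_of_mem y hnm.symm))⟩

/-! ### Saturated countable sets -/

theorem exists_countable_superset_closed_of_finite {α : Type*} {s : Set α} (hs : s.Countable)
    {Φ : Set α → Set α} (hΦ : ∀ t, t.Finite → (Φ t).Countable) :
    ∃ D, s ⊆ D ∧ D.Countable ∧ ∀ t ⊆ D, t.Finite → Φ t ⊆ D := by
  let next (A : Set α) : Set α := A ∪ ⋃ t ∈ {t | t.Finite ∧ t ⊆ A}, Φ t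
  have hcountable : ∀ n, (next^[n] s).Countable := by
    intro n
    induction n with
    | zero => exact hs
    | succ n ih =>
      rw [Function.iterate_succ_apply']
      exact ih.union ((countable_ofPred_finite_subset ih).biUnion fun t ht => hΦ t ht.1)
  have hmono : Monotone fun n => next^[n] s := monotone_nat_of_le_succ fun n => by
    rw [Function.iterate_succ_apply']
    exact subset_union_left
  refine ⟨⋃ n, next^[n] s, subset_iUnion_of_subset 0 subset_rfl, countable_iUnion hcountable,
    fun t ht htf => ?_⟩
  lift t to Finset α using htf
  obtain ⟨n, hn⟩ := hmono.directed_le.exists_mem_subset_of_finset_subset_biUnion ht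
  refine subset_iUnion_of_subset (n + 1) ?_
  rw [Function.iterate_succ_apply']
  have ht_mem : (t : Set α) ∈ {t | t.Finite ∧ t ⊆ next^[n] s} := ⟨t.finite_toSet, hn⟩
  exact (subset_biUnion_of_mem (u := Φ) ht_mem).trans subset_union_right

/-- Every point of `D` is a limit of convex combinations of points of `D` that are almost
`ℓ₁`-orthogonal to a given finite part of `D`. The closed unit ball of a Daugavet space is such a
set, and the property is inherited by suitable countable subsets. -/
def IsL1Saturated (D : Set X) : Prop :=
  ∀ t ⊆ D, t.Finite → ∀ d ∈ D, ∀ ε > 0,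
    d ∈ closedConvexHull ℝ {y ∈ D | AlmostL1Orthogonal (Submodule.span ℝ t) ε y}

theorem IsL1Saturated.norm_le_one {D : Set X} (hD : IsL1Saturated D) {d : X} (hd : d ∈ D) :
    ‖d‖ ≤ 1 := by
  have hball : {y ∈ D | AlmostL1Orthogonal (Submodule.span ℝ ∅) 1 y} ⊆ Metric.closedBall 0 1 :=
    fun y hy => mem_closedBall_zero_iff.2 hy.2.1
  exact mem_closedBall_zero_iff.1 (closedConvexHull_min hball (convex_closedBall 0 1)
    Metric.isClosed_closedBall (hD ∅ (empty_subset D) finite_empty d hd 1 one_pos))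

namespace DaugavetProperty

theorem exists_countable_mem_closedConvexHull (h : DaugavetProperty X) (F : Submodule ℝ X)
    [FiniteDimensional ℝ F] {d : X} (hd : ‖d‖ ≤ 1) :
    ∃ W : Set X, W.Countable ∧
      ∀ ε > 0, d ∈ closedConvexHull ℝ {y ∈ W | AlmostL1Orthogonal F ε y} := by
  choose W hW hW_countable hdW using fun n : ℕ => exists_countable_subset_mem_closedConvexHull
    (h.mem_closedConvexHull_almostL1Orthogonal F hd (Nat.one_div_pos_of_nat (n := n)))
  refine ⟨⋃ n, W n, countable_iUnion hW_countable, fun ε hε => ?_⟩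
  obtain ⟨n, hn⟩ := exists_nat_one_div_lt hε
  refine (closedConvexHull ℝ).monotone (fun y hy => ?_) (hdW n)
  exact ⟨mem_iUnion_of_mem n hy, (hW n hy).mono le_rfl hn.le⟩

theorem exists_countable_forall_mem_closedConvexHull (h : DaugavetProperty X) {t : Set X}
    (ht : t.Finite) :
    ∃ W : Set X, W.Countable ∧ ∀ d ∈ t, ‖d‖ ≤ 1 → ∀ ε > 0,
      d ∈ closedConvexHull ℝ {y ∈ W | AlmostL1Orthogonal (Submodule.span ℝ t) ε y} := by
  have := FiniteDimensional.span_of_finite ℝ ht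
  choose! W hW_countable hW using fun (d : X) (hd : ‖d‖ ≤ 1) =>
    h.exists_countable_mem_closedConvexHull (Submodule.span ℝ t) hd
  refine ⟨⋃ d ∈ {d ∈ t | ‖d‖ ≤ 1}, W d,
    (ht.subset (sep_subset _ _)).countable.biUnion fun d hd => hW_countable d hd.2,
    fun d hdt hd ε hε => (closedConvexHull ℝ).monotone (fun y hy => ?_) (hW d hd ε hε)⟩
  exact ⟨mem_biUnion (⟨hdt, hd⟩ : d ∈ {d ∈ t | ‖d‖ ≤ 1}) hy.1, hy.2⟩

theorem exists_countable_isL1Saturated (h : DaugavetProperty X) {s : Set X} (hs : s.Countable)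
    (hs_norm : ∀ x ∈ s, ‖x‖ ≤ 1) : ∃ D, s ⊆ D ∧ D.Countable ∧ IsL1Saturated D := by
  choose! W hW_countable hW using fun (t : Set X) (ht : t.Finite) =>
    h.exists_countable_forall_mem_closedConvexHull ht
  obtain ⟨D, hsD, hD_countable, hD⟩ := exists_countable_superset_closed_of_finite hs hW_countable
  refine ⟨{x ∈ D | ‖x‖ ≤ 1}, fun x hx => ⟨hsD hx, hs_norm x hx⟩,
    hD_countable.mono (sep_subset _ _), fun t ht htf d hd ε hε => ?_⟩
  have hsub : insert d t ⊆ D := insert_subset hd.1 (ht.trans (sep_subset _ _))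
  have htf' : (insert d t).Finite := htf.insert d
  refine (closedConvexHull ℝ).monotone (fun y hy => ?_) (hW _ htf' d (mem_insert d t) hd.2 ε hε)
  exact ⟨⟨hD _ hsub htf' hy.1, hy.2.1⟩,
    hy.2.mono (Submodule.span_mono (subset_insert d t)) le_rfl⟩

end DaugavetProperty

/-! ### Signed perturbations of a bounded sequence -/

/-- The points `p n ± v n`. If the `v n` are long and well separated by functionals, these are
denting points of the closed convex hull of their union with `-range p`. -/
def signedPerturbations {G : Type*} [AddCommGroup G] (p v : ℕ → G) : Set G :=
  range (p + v) ∪ range (p - v)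

theorem signedPerturbations_neg {G : Type*} [AddCommGroup G] (p v : ℕ → G) :
    signedPerturbations p (-v) = signedPerturbations p v := by
  rw [signedPerturbations, ← sub_eq_add_neg, sub_neg_eq_add, union_comm, signedPerturbations]

theorem countable_signedPerturbations {G : Type*} [AddCommGroup G] (p v : ℕ → G) :
    (signedPerturbations p v).Countable :=
  (countable_range _).union (countable_range _)

theorem isBounded_signedPerturbations {G : Type*} [SeminormedAddCommGroup G] {p v : ℕ → G}
    (hp : IsBounded (range p)) (hv : IsBounded (range v)) :
    IsBounded (signedPerturbations p v) := by
  refine ((hp.add hv).subset ?_).union ((hp.sub hv).subset ?_) <;> rintro _ ⟨n, rfl⟩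
  · exact add_mem_add (mem_range_self n) (mem_range_self n)
  · exact sub_mem_sub (mem_range_self n) (mem_range_self n)

section SignedPerturbations

variable {p v : ℕ → X}

theorem apply_eq_of_mem_signedPerturbations {f : X →L[ℝ] ℝ} {c : ℝ} (hfp : ∀ n, f (p n) = c)
    (hfv : ∀ n, f (v n) = 0) : ∀ e ∈ signedPerturbations p v, f e = c := by
  rintro _ (⟨n, rfl⟩ | ⟨n, rfl⟩) <;> simp [hfp, hfv]

theorem signedPerturbations_union_neg_range_subset_closedAbsConvexHull :
    signedPerturbations p v ∪ -range p ⊆ closedAbsConvexHull ℝ (signedPerturbations p v) := by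
  refine union_subset subset_closedAbsConvexHull fun x hx => ?_
  obtain ⟨n, hn⟩ := hx
  have hadd : p n + v n ∈ closedAbsConvexHull ℝ (signedPerturbations p v) :=
    subset_closedAbsConvexHull (.inl ⟨n, rfl⟩)
  have hsub : p n - v n ∈ closedAbsConvexHull ℝ (signedPerturbations p v) :=
    subset_closedAbsConvexHull (.inr ⟨n, rfl⟩)
  have hmid : p n ∈ closedAbsConvexHull ℝ (signedPerturbations p v) := by
    convert absConvex_convexClosedHull.2.midpoint_mem hadd hsub
    rw [midpoint_add_sub]
  rw [← neg_neg x, ← hn]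
  exact absConvex_convexClosedHull.1.neg_mem_iff.2 hmid

theorem isDentingPoint_closedConvexHull_signedPerturbations_union (hp : IsBounded (range p))
    (hv : IsBounded (range v)) {G : X →L[ℝ] ℝ} {L : ℝ} (hGp : ∀ m, |G (p m)| ≤ L) {n : ℕ}
    (hGv : ∀ m ≠ n, G (v m) = 0) (hgap : 2 * L < G (v n)) :
    IsDentingPoint (closedConvexHull ℝ (signedPerturbations p v ∪ -range p)) (p n + v n) := by
  have hpn := abs_le.1 (hGp n)
  refine isDentingPoint_closedConvexHull_of_gap (G := G) (γ := G (v n) - 2 * L)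
    ((isBounded_signedPerturbations hp hv).union hp.neg) (.inl (.inl ⟨n, rfl⟩)) ?_
    (sub_pos.2 hgap) ?_
  · rintro rfl
    simp only [zero_apply] at hgap hpn
    linarith
  rintro x ((⟨m, rfl⟩ | ⟨m, rfl⟩) | ⟨m, hm⟩) hx
  · have hmn : m ≠ n := fun hmn => hx (by rw [hmn, Pi.add_apply])
    simp only [Pi.add_apply, map_add, hGv m hmn]
    linarith [abs_le.1 (hGp m)]
  · simp only [Pi.sub_apply, map_add, map_sub]
    rcases eq_or_ne m n with rfl | hmn
    · linarith
    · rw [hGv m hmn]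
      linarith [abs_le.1 (hGp m)]
  · rw [← neg_neg x, ← hm, map_neg, map_add]
    linarith [abs_le.1 (hGp m)]

theorem isASCD_closedConvexHull_signedPerturbations_union (hp : IsBounded (range p))
    (hv : IsBounded (range v)) {g : ℕ → X →L[ℝ] ℝ} {L : ℝ} (hgp : ∀ n m, |g n (p m)| ≤ L)
    (hgv : ∀ ⦃n m⦄, n ≠ m → g n (v m) = 0) (hgap : ∀ n, 2 * L < g n (v n)) :
    IsASCD (closedConvexHull ℝ (signedPerturbations p v ∪ -range p)) := by
  refine isASCD_of_countable_isDentingPoint (countable_signedPerturbations p v)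
    ⟨_, .inl ⟨0, rfl⟩⟩ ?_ (closedConvexHull_min
      signedPerturbations_union_neg_range_subset_closedAbsConvexHull
      absConvex_convexClosedHull.2 isClosed_closedAbsConvexHull)
  rintro _ (⟨n, rfl⟩ | ⟨n, rfl⟩)
  · exact isDentingPoint_closedConvexHull_signedPerturbations_union hp hv (hgp n)
      (fun m hm => hgv hm.symm) (hgap n)
  · have hv' : IsBounded (range (-v)) := neg_range (f := v) ▸ hv.neg
    rw [← signedPerturbations_neg, sub_eq_add_neg]
    exact isDentingPoint_closedConvexHull_signedPerturbations_union (G := -g n) hp hv'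
      (by simpa using hgp n) (fun m hm => by simp [hgv hm.symm]) (by simpa using hgap n)

theorem IsBoundedBiorthogonal.exists_isASCD_closedConvexHull {K : ℝ} {y : ℕ → X}
    {g : ℕ → X →L[ℝ] ℝ} (hyg : IsBoundedBiorthogonal K y g) (hp : IsBounded (range p)) :
    ∃ R : ℝ, IsASCD (closedConvexHull ℝ (signedPerturbations p (R • y) ∪ -range p)) := by
  obtain ⟨r, hpr⟩ := hp.exists_norm_le
  have hgp : ∀ n m, |g n (p m)| ≤ K * r := fun n m =>
    (g n).le_of_opNorm_le_of_le (hyg.norm_dual_le n) (hpr _ (mem_range_self m))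
  refine ⟨2 * (K * r) + 1, isASCD_closedConvexHull_signedPerturbations_union hp
    (hyg.isBounded_range_smul _) hgp (fun n m hnm => ?_) fun n => ?_⟩
  · simp [hyg.apply_of_ne hnm]
  · simp [hyg.apply_self]

end SignedPerturbations

/-! ### Failure of slice countable determination -/

/-- The affine map `x ↦ x + (1 - f x) • u`. When `f u = 1`, it is the projection onto the hyperplane
`f = 1` in the direction `u`. -/
noncomputable def hyperplaneProj (f : X →L[ℝ] ℝ) (u : X) : X →ᴬ[ℝ] X :=
  (ContinuousLinearMap.id ℝ X - f.smulRight u).toContinuousAffineMap +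
    ContinuousAffineMap.const ℝ X u

section HyperplaneProj

variable {f : X →L[ℝ] ℝ} {u : X}

theorem hyperplaneProj_apply (x : X) : hyperplaneProj f u x = x + (1 - f x) • u := by
  simp only [hyperplaneProj, ContinuousAffineMap.add_apply,
    ContinuousLinearMap.coe_toContinuousAffineMap, ContinuousAffineMap.coe_const,
    Function.const_apply, sub_apply, ContinuousLinearMap.id_apply,
    ContinuousLinearMap.smulRight_apply]
  module

theorem apply_hyperplaneProj (hfu : f u = 1) (x : X) : f (hyperplaneProj f u x) = 1 := by
  simp [hyperplaneProj_apply, hfu]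

theorem apply_hyperplaneProj_of_apply_eq_zero {φ : X →L[ℝ] ℝ} (hφu : φ u = 0) (x : X) :
    φ (hyperplaneProj f u x) = φ x := by
  simp [hyperplaneProj_apply, hφu]

theorem neg_hyperplaneProj_mem_closedConvexHull {s : Set X} {x : X}
    (hx : x ∈ closedConvexHull ℝ s) :
    -hyperplaneProj f u x ∈ closedConvexHull ℝ (-(hyperplaneProj f u '' s)) := by
  have himage : (-hyperplaneProj f u) '' s = -(hyperplaneProj f u '' s) := by
    rw [← image_neg_eq_neg, image_image]
    rfl
  exact himage ▸ map_mem_closedConvexHull (-hyperplaneProj f u) hx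

theorem isBounded_hyperplaneProj_image {s : Set X} (hs : IsBounded s) :
    IsBounded (hyperplaneProj f u '' s) := by
  refine (((ContinuousLinearMap.id ℝ X - f.smulRight u).lipschitz.isBounded_image hs).add
    isBounded_singleton).subset (t := _ + {u}) (image_subset_iff.2 fun x hx => ?_)
  exact add_mem_add (mem_image_of_mem _ hx) (mem_singleton u)

theorem neg_hyperplaneProj_notMem_closedConvexHull {E s : Set X} (hE : IsBounded E)
    (hfE : ∀ e ∈ E, f e = 1) (hfu : f u = 1) {φ : X →L[ℝ] ℝ} (hφu : φ u = 0)
    (hφs : ∀ y ∈ s, φ y = 0) {x : X} (hφx : 0 < φ x) :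
    -hyperplaneProj f u x ∉ closedConvexHull ℝ (E ∪ -(hyperplaneProj f u '' s)) := by
  obtain ⟨r, hr, hφE⟩ : ∃ r : ℝ, 0 ≤ r ∧ ∀ e ∈ E, |φ e| ≤ r := by
    obtain ⟨r, hr, hEr⟩ := (φ.lipschitz.isBounded_image hE).exists_pos_norm_le
    exact ⟨r, hr.le, forall_mem_image.1 hEr⟩
  intro hx
  have hle : (-(φ + r • f)) (-hyperplaneProj f u x) ≤ r := by
    refine apply_le_of_mem_closedConvexHull ?_ hx
    rintro e (he | ⟨y, hy, hye⟩)
    · have := neg_le_of_abs_le (hφE e he)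
      simp only [neg_apply, add_apply, smul_apply, hfE e he, smul_eq_mul]
      linarith
    · rw [← neg_neg e, ← hye]
      simp [apply_hyperplaneProj hfu, apply_hyperplaneProj_of_apply_eq_zero hφu, hφs y hy]
  simp only [map_neg, neg_apply, neg_neg, add_apply, smul_apply, smul_eq_mul,
    apply_hyperplaneProj hfu, apply_hyperplaneProj_of_apply_eq_zero hφu] at hle
  linarith

theorem IsL1Saturated.exists_almostL1Orthogonal_inter_nonempty {D E S t : Set X}
    (hD : IsL1Saturated D) (hDne : D.Nonempty)
    (hS : IsSlice (closedConvexHull ℝ (E ∪ -(hyperplaneProj f u '' D))) S)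
    (ht : t ⊆ D) (htf : t.Finite) {ε : ℝ} (hε : 0 < ε) :
    ∃ y ∈ D, AlmostL1Orthogonal (Submodule.span ℝ t) ε y ∧
      ((E ∪ {-hyperplaneProj f u y}) ∩ S).Nonempty := by
  have hSC : S ⊆ closedConvexHull ℝ (E ∪ -(hyperplaneProj f u '' D)) := by
    obtain ⟨-, _, -, _, -, rfl⟩ := hS
    exact sep_subset _ _
  have hmeet := hS.inter_nonempty_of_inter_closedConvexHull subset_closedConvexHull
    (hS.1.mono (subset_inter hSC subset_rfl))
  obtain ⟨e, he | ⟨d, hd, hde⟩, heS⟩ := hmeet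
  · obtain ⟨d, hd⟩ := hDne
    have hhull : (closedConvexHull ℝ
        {y ∈ D | AlmostL1Orthogonal (Submodule.span ℝ t) ε y}).Nonempty :=
      ⟨d, hD t ht htf d hd ε hε⟩
    rw [closedConvexHull_eq_closure_convexHull, closure_nonempty_iff,
      convexHull_nonempty_iff] at hhull
    obtain ⟨y, hyD, hy⟩ := hhull
    exact ⟨y, hyD, hy, e, .inl he, heS⟩
  · have hsub : -(hyperplaneProj f u '' {y ∈ D | AlmostL1Orthogonal (Submodule.span ℝ t) ε y}) ⊆
        closedConvexHull ℝ (E ∪ -(hyperplaneProj f u '' D)) :=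
      (neg_subset_neg.2 (image_mono (sep_subset _ _))).trans
        (subset_union_right.trans subset_closedConvexHull)
    have hmem := neg_hyperplaneProj_mem_closedConvexHull (f := f) (u := u) (hD t ht htf d hd ε hε)
    rw [hde, neg_neg] at hmem
    obtain ⟨x, ⟨y, ⟨hyD, hy⟩, hyx⟩, hxS⟩ :=
      hS.inter_nonempty_of_inter_closedConvexHull hsub ⟨e, hmem, heS⟩
    exact ⟨y, hyD, hy, x, .inr (by rw [mem_singleton_iff, hyx, neg_neg]), hxS⟩

theorem not_isSCD_closedConvexHull_union {D E : Set X} (hD : IsL1Saturated D) (hu : u ∈ D)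
    {x : X} (hx : x ∈ D) (hxu : x ∉ Submodule.span ℝ {u}) (hfu : f u = 1) (hE : IsBounded E)
    (hfE : ∀ e ∈ E, f e = 1) :
    ¬ IsSCD (closedConvexHull ℝ (E ∪ -(hyperplaneProj f u '' D))) := by
  rintro ⟨V, hV, hdet⟩
  obtain ⟨y, hy, hyV⟩ := exists_isAlmostL1Sequence (toFinite {u, x}) (pair_subset hu hx)
    fun n t ht htf ε hε => hD.exists_almostL1Orthogonal_inter_nonempty ⟨u, hu⟩ (hV n) ht htf hε
  obtain ⟨φ, hφx, hφu, hφy⟩ := hy.exists_dual_eq_one (M := Submodule.span ℝ {u})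
    (Submodule.closed_of_finiteDimensional _) (Submodule.span_mono (by simp))
    (Submodule.subset_span (by simp)) hxu
  have hB : ∀ n, ((E ∪ -(hyperplaneProj f u '' range y)) ∩ V n).Nonempty := fun n =>
    (hyV n).mono (inter_subset_inter_left _ (union_subset_union_right E
      (singleton_subset_iff.2 (neg_mem_neg.2 (mem_image_of_mem _ (mem_range_self n))))))
  refine neg_hyperplaneProj_notMem_closedConvexHull (s := range y) hE hfE hfu
    (hφu u (Submodule.mem_span_singleton_self u)) (forall_mem_range.2 hφy)
    (hφx ▸ one_pos) ?_
  rw [closedConvexHull_eq_closure_convexHull]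
  exact hdet _ hB (subset_closedConvexHull (.inr (neg_mem_neg.2 (mem_image_of_mem _ hx))))

end HyperplaneProj

theorem exists_ascd_not_scd_general (h : DaugavetProperty X) :
    ∃ C : Set X, Convex ℝ C ∧ IsClosed C ∧ IsBounded C ∧ IsASCD C ∧ ¬ IsSCD C := by
  obtain ⟨y, g, hyg⟩ := h.exists_isBoundedBiorthogonal
  obtain ⟨D, hyD, hD_countable, hD⟩ := h.exists_countable_isL1Saturated (countable_range y)
    (forall_mem_range.2 hyg.norm_le_one)
  obtain ⟨d, rfl⟩ := hD_countable.exists_eq_range ((range_nonempty y).mono hyD)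
  let p : ℕ → X := hyperplaneProj (g 0) (y 0) ∘ d
  have hp : IsBounded (range p) := range_comp _ d ▸ isBounded_hyperplaneProj_image
    (isBounded_iff_forall_norm_le.2 ⟨1, fun _ => hD.norm_le_one⟩)
  have hyg_succ := hyg.comp_injective Nat.succ_injective
  obtain ⟨R, hASCD⟩ := hyg_succ.exists_isASCD_closedConvexHull hp
  have hE : IsBounded (signedPerturbations p (R • (y ∘ Nat.succ))) :=
    isBounded_signedPerturbations hp (hyg_succ.isBounded_range_smul R)
  have hgE := apply_eq_of_mem_signedPerturbations (f := g 0) (p := p) (v := R • (y ∘ Nat.succ))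
    (fun n => apply_hyperplaneProj (hyg.apply_self 0) (d n))
    (fun n => by simp [hyg.apply_of_ne n.succ_ne_zero.symm])
  refine ⟨_, convex_closedConvexHull, isClosed_closedConvexHull,
    isBounded_closedConvexHull (hE.union hp.neg), hASCD, ?_⟩
  rw [range_comp]
  exact not_isSCD_closedConvexHull_union hD (hyD (mem_range_self 0)) (hyD (mem_range_self 1))
    (hyg.notMem_span_singleton one_ne_zero) (hyg.apply_self 0) hE hgE

theorem exists_ascd_not_scd
    {X : Type*} [NormedAddCommGroup X] [NormedSpace ℝ X] [CompleteSpace X]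
    (h : DaugavetProperty X) :
    ∃ C : Set X, Convex ℝ C ∧ IsClosed C ∧ IsBounded C ∧ IsASCD C ∧ ¬ IsSCD C :=
  exists_ascd_not_scd_general h
end

section
/- Let X be a real Banach space and let U ⊂ X be a nonempty convex, closed, bounded, balanced set (i.e., λU ⊂ U for all real λ with |λ| ≤ 1). For a sequence {V_n : n ∈ ℕ} of nonempty subsets of U, the following are equivalent: (i) the sequence is balanced determining for U, i.e., every set B ⊂ X with B ∩ V_n ≠ ∅ for all n ∈ ℕ satisfies U ⊂ closure(absConvexHull(B)); (ii) every balanced slice of U contains one of the V_n. -/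
open Bornology Set Pointwise

variable {X : Type*} [NormedAddCommGroup X] [NormedSpace ℝ X]

/-- The balanced slice of a balanced set `U` given by `f` and `ε > 0`. -/
noncomputable def balancedSlice {X : Type*} [NormedAddCommGroup X] [NormedSpace ℝ X]
    (U : Set X) (f : X →L[ℝ] ℝ) (ε : ℝ) : Set X :=
  {x ∈ U | sSup ((fun a => |f a|) '' U) - ε < |f x|}

/-!
By Hahn–Banach, a point lies in the closed absolutely convex hull of `B` exactly when every strip
`{|f| ≤ c}` containing `B` contains the point. A strip contains some `B` meeting every `V i` if and
only if it meets every `V i` itself. So the family `V` is balanced determining for `U` exactly when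
every strip meeting all the `V i` contains `U`, that is, when every `{|f| > c}` meeting `U` contains
some `V i`. The sets `{|f| > c}` meeting a bounded `U` are those with `c < sup_U |f|`, and they cut
out the balanced slices.
-/

section LocallyConvex

variable {E : Type*} [AddCommGroup E] [Module ℝ E]

theorem absConvex_setOf_abs_le (f : E →ₗ[ℝ] ℝ) (c : ℝ) : AbsConvex ℝ {x | |f x| ≤ c} := by
  have strip_eq_closedBall : {x | |f x| ≤ c} = f.toSeminorm.closedBall 0 c := by
    ext x
    simp
  rw [strip_eq_closedBall]
  exact ⟨Seminorm.balanced_closedBall_zero _ _, Seminorm.convex_closedBall _ _ _⟩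

variable [TopologicalSpace E]

theorem closure_absConvexHull_subset_setOf_abs_le {f : E →L[ℝ] ℝ} {c : ℝ} {B : Set E}
    (hB : ∀ b ∈ B, |f b| ≤ c) : closure (absConvexHull ℝ B) ⊆ {x | |f x| ≤ c} :=
  closure_minimal (absConvexHull_min hB (absConvex_setOf_abs_le f.toLinearMap c))
    (isClosed_le f.continuous.abs continuous_const)

variable [IsTopologicalAddGroup E] [ContinuousSMul ℝ E] [LocallyConvexSpace ℝ E]

theorem exists_forall_abs_lt_of_notMem_closure_absConvexHull {B : Set E} {x : E}
    (hx : x ∉ closure (absConvexHull ℝ B)) :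
    ∃ (f : E →L[ℝ] ℝ) (c : ℝ), (∀ b ∈ B, |f b| < c) ∧ c < f x := by
  obtain ⟨f, c, hf_lt, hfx⟩ :=
    geometric_hahn_banach_closed_point convex_absConvexHull.closure isClosed_closure hx
  refine ⟨f, c, fun b hb => abs_lt.2 ⟨neg_lt.1 ?_, ?_⟩, hfx⟩
  · have neg_mem : -b ∈ absConvexHull ℝ B :=
      balanced_absConvexHull.neg_mem_iff.2 (subset_absConvexHull hb)
    simpa only [map_neg] using hf_lt (-b) (subset_closure neg_mem)
  · exact hf_lt b (subset_closure (subset_absConvexHull hb))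

theorem mem_closure_absConvexHull_iff {B : Set E} {x : E} :
    x ∈ closure (absConvexHull ℝ B) ↔
      ∀ (f : E →L[ℝ] ℝ) (c : ℝ), (∀ b ∈ B, |f b| ≤ c) → |f x| ≤ c := by
  refine ⟨fun hx f c hB => closure_absConvexHull_subset_setOf_abs_le hB hx, fun h => ?_⟩
  by_contra hx
  obtain ⟨f, c, hB, hfx⟩ := exists_forall_abs_lt_of_notMem_closure_absConvexHull hx
  exact (hfx.trans_le (le_abs_self _)).not_ge (h f c fun b hb => (hB b hb).le)

theorem forall_subset_closure_absConvexHull_iff {ι : Sort*} {U : Set E} {V : ι → Set E} :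
    (∀ B : Set E, (∀ i, (B ∩ V i).Nonempty) → U ⊆ closure (absConvexHull ℝ B)) ↔
      ∀ (f : E →L[ℝ] ℝ) (c : ℝ), (∃ x ∈ U, c < |f x|) → ∃ i, ∀ v ∈ V i, c < |f v| := by
  constructor
  · rintro h f c ⟨x, hxU, hx⟩
    by_contra! strip_meets
    have hU := h {v | |f v| ≤ c} fun i =>
      let ⟨v, hvV, hv⟩ := strip_meets i
      ⟨v, hv, hvV⟩
    exact hx.not_ge (closure_absConvexHull_subset_setOf_abs_le (fun _ hb => hb) (hU hxU))
  · intro h B hB x hxU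
    refine mem_closure_absConvexHull_iff.2 fun f c hBc => ?_
    by_contra! hx
    obtain ⟨i, hi⟩ := h f c ⟨x, hxU, hx⟩
    obtain ⟨b, hbB, hbV⟩ := hB i
    exact (hi b hbV).not_ge (hBc b hbB)

end LocallyConvex

theorem bddAbove_abs_image {U : Set X} (hU : IsBounded U) (f : X →L[ℝ] ℝ) :
    BddAbove ((fun a => |f a|) '' U) :=
  ((lipschitzWith_one_norm.comp f.lipschitz).isBounded_image hU).bddAbove

theorem balancedSlice_zero (U : Set X) {ε : ℝ} (hε : 0 < ε) : balancedSlice U 0 ε = U := by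
  refine sep_eq_self_iff_mem_true.2 fun x hx => ?_
  have hU : U.Nonempty := ⟨x, hx⟩
  simpa [hU.image_const] using hε

theorem forall_exists_subset_balancedSlice_iff {ι : Sort*} {U : Set X} (hU : U.Nonempty)
    {f : X →L[ℝ] ℝ} (hf : BddAbove ((fun a => |f a|) '' U)) {V : ι → Set X}
    (hVU : ∀ i, V i ⊆ U) :
    (∀ ε : ℝ, 0 < ε → ∃ i, V i ⊆ balancedSlice U f ε) ↔
      ∀ c : ℝ, (∃ x ∈ U, c < |f x|) → ∃ i, ∀ v ∈ V i, c < |f v| := by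
  have exists_lt_iff (c : ℝ) : (∃ x ∈ U, c < |f x|) ↔ c < sSup ((fun a => |f a|) '' U) := by
    rw [lt_csSup_iff hf (hU.image _), exists_mem_image]
  simp only [exists_lt_iff]
  constructor
  · intro h c hc
    obtain ⟨i, hi⟩ := h _ (sub_pos.2 hc)
    exact ⟨i, fun v hv => by simpa only [sub_sub_cancel] using (hi hv).2⟩
  · intro h ε hε
    obtain ⟨i, hi⟩ := h _ (sub_lt_self _ hε)
    exact ⟨i, fun v hv => ⟨hVU i hv, hi v hv⟩⟩

theorem balanced_determining_iff_general {ι : Sort*} [Nonempty ι] {U : Set X} (hU : U.Nonempty)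
    (hUb : IsBounded U) {V : ι → Set X} (hVU : ∀ i, V i ⊆ U) :
    (∀ B : Set X, (∀ i, (B ∩ V i).Nonempty) → U ⊆ closure (absConvexHull ℝ B)) ↔
      ∀ f : X →L[ℝ] ℝ, f ≠ 0 → ∀ ε : ℝ, 0 < ε → ∃ i, V i ⊆ balancedSlice U f ε := by
  have zero_slices (ε : ℝ) (hε : 0 < ε) : ∃ i, V i ⊆ balancedSlice U 0 ε :=
    ⟨Classical.arbitrary ι, by simpa only [balancedSlice_zero U hε] using hVU _⟩
  calc
    _ ↔ ∀ (f : X →L[ℝ] ℝ) (c : ℝ), (∃ x ∈ U, c < |f x|) → ∃ i, ∀ v ∈ V i, c < |f v| :=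
      forall_subset_closure_absConvexHull_iff
    _ ↔ ∀ (f : X →L[ℝ] ℝ) (ε : ℝ), 0 < ε → ∃ i, V i ⊆ balancedSlice U f ε :=
      forall_congr' fun f =>
        (forall_exists_subset_balancedSlice_iff hU (bddAbove_abs_image hUb f) hVU).symm
    _ ↔ _ := ⟨fun h f _ => h f, fun h f => (eq_or_ne f 0).elim (· ▸ zero_slices) (h f)⟩

theorem balanced_determining_iff
    {X : Type*} [NormedAddCommGroup X] [NormedSpace ℝ X] [CompleteSpace X]
    (U : Set X) (hU : U.Nonempty) (hUc : Convex ℝ U) (hUcl : IsClosed U)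
    (hUb : IsBounded U) (hUbal : Balanced ℝ U)
    (V : ℕ → Set X) (hVne : ∀ n, (V n).Nonempty) (hVU : ∀ n, V n ⊆ U) :
    (∀ B : Set X, (∀ n, (B ∩ V n).Nonempty) → U ⊆ closure (absConvexHull ℝ B)) ↔
      ∀ (f : X →L[ℝ] ℝ), f ≠ 0 → ∀ ε : ℝ, 0 < ε →
        ∃ n, V n ⊆ balancedSlice U f ε := by
  exact balanced_determining_iff_general hU hUb hVU
end

section
/- Let X be a real Banach space and let U ⊂ X be a convex, closed, bounded, balanced set (i.e., λU ⊂ U for all real λ with |λ| ≤ 1). If U is aSCD, then U is SCD. -/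
open Bornology Set Pointwise

variable {X : Type*} [NormedAddCommGroup X] [NormedSpace ℝ X]

/-!
Take all slices `V n` of an aSCD sequence together with their reflections `-V n`. Suppose that `B`
meets all of these and that a functional `f` satisfies `f < u` on `B`. The points of `B` in `V n`
and in `-V n` give two points `b` and `-c` of the convex set `V n` with `f b < u` and `f c < u`, so
the segment between them contains a point `s n` with `|f (s n)| ≤ max u 0`. The aSCD property
applied to the points `s n` gives `|f| ≤ max u 0` on `U`. Here `u > 0`, since otherwise `f` would
vanish on `U`, which meets `B`; so `f` cannot separate a point of `U` from `B`.
-/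

section ConvexHulls

lemma exists_mem_abs_map_le_of_convex {𝕜 E : Type*} [Field 𝕜] [LinearOrder 𝕜]
    [IsStrictOrderedRing 𝕜] [AddCommGroup E] [Module 𝕜 E] {S : Set E} (hS : Convex 𝕜 S)
    (f : E →ₗ[𝕜] 𝕜) {b c : E} {r : 𝕜} (hb : b ∈ S) (hc : -c ∈ S) (hr : 0 ≤ r)
    (hfb : f b ≤ r) (hfc : f c ≤ r) : ∃ s ∈ S, |f s| ≤ r := by
  rcases le_total 0 (f b) with hb₀ | hb₀
  · exact ⟨b, hb, by rwa [abs_of_nonneg hb₀]⟩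
  rcases le_total 0 (f c) with hc₀ | hc₀
  · exact ⟨-c, hc, by rwa [map_neg, abs_neg, abs_of_nonneg hc₀]⟩
  have h_image : (f '' S).OrdConnected := (hS.linear_image f).ordConnected
  obtain ⟨s, hs, hfs⟩ : (0 : 𝕜) ∈ f '' S :=
    h_image.out (mem_image_of_mem f hb) (mem_image_of_mem f hc)
      ⟨hb₀, by rwa [map_neg, neg_nonneg]⟩
  exact ⟨s, hs, by rwa [hfs, abs_zero]⟩

variable {E ι : Type*} [AddCommGroup E] [Module ℝ E] [TopologicalSpace E]

lemma abs_map_le_of_mem_closure_absConvexHull (f : E →L[ℝ] ℝ) {C : Set E} {r : ℝ}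
    (hC : ∀ x ∈ C, |f x| ≤ r) {x : E} (hx : x ∈ closure (absConvexHull ℝ C)) : |f x| ≤ r := by
  have h_hull : absConvexHull ℝ C ⊆ f ⁻¹' Metric.closedBall 0 r :=
    absConvexHull_min (fun y hy ↦ by simpa using hC y hy)
      ⟨balanced_closedBall_zero.mulActionHom_preimage (f := f.toLinearMap.toMulActionHom),
        (convex_closedBall 0 r).linear_preimage f.toLinearMap⟩
  simpa using closure_minimal h_hull (Metric.isClosed_closedBall.preimage f.continuous) hx

variable [IsTopologicalAddGroup E] [ContinuousSMul ℝ E] [LocallyConvexSpace ℝ E]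

lemma subset_closure_convexHull_of_inter_neg_nonempty [Nonempty ι] {A B : Set E} {V : ι → Set E}
    (hVA : ∀ i, V i ⊆ A) (hV : ∀ i, Convex ℝ (V i))
    (hdet : ∀ C : Set E, (∀ i, (C ∩ V i).Nonempty) → A ⊆ closure (absConvexHull ℝ C))
    (hB : ∀ i, (B ∩ V i).Nonempty) (hB_neg : ∀ i, (B ∩ -V i).Nonempty) :
    A ⊆ closure (convexHull ℝ B) := by
  by_contra h_sub
  obtain ⟨x, hxA, hxB⟩ := not_subset.mp h_sub
  obtain ⟨f, u, hfu, hux⟩ := geometric_hahn_banach_closed_point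
    (convex_convexHull ℝ B).closure isClosed_closure hxB
  have hfB : ∀ b ∈ B, f b < u := fun b hb ↦ hfu b (subset_closure (subset_convexHull ℝ B hb))
  have h_small : ∀ i, ∃ s ∈ V i, |f s| ≤ max u 0 := fun i ↦ by
    obtain ⟨b, hb, hbV⟩ := hB i
    obtain ⟨c, hc, hcV⟩ := hB_neg i
    exact exists_mem_abs_map_le_of_convex (hV i) f.toLinearMap hbV hcV (le_max_right u 0)
      ((hfB b hb).le.trans (le_max_left u 0)) ((hfB c hc).le.trans (le_max_left u 0))
  choose s hsV hfs using h_small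
  have hfA : ∀ a ∈ A, |f a| ≤ max u 0 := fun a ha ↦
    abs_map_le_of_mem_closure_absConvexHull f (forall_mem_range.mpr hfs)
      (hdet (range s) (fun i ↦ ⟨s i, mem_range_self i, hsV i⟩) ha)
  have hu : 0 < u := by
    by_contra! hu
    obtain ⟨b, hb, hbV⟩ := hB (Classical.arbitrary ι)
    have hfb : f b = 0 := by simpa [hu] using hfA b (hVA _ hbV)
    linarith [hfB b hb]
  have hfx : f x ≤ u := (le_abs_self _).trans (by simpa [hu.le] using hfA x hxA)
  exact hfx.not_gt hux

end ConvexHulls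

section Slices

variable {A S : Set X}

lemma sliceSet_neg_neg (A : Set X) (f : X →L[ℝ] ℝ) (ε : ℝ) :
    sliceSet (-A) (-f) ε = -sliceSet A f ε := by
  have h_image : ⇑(-f) '' (-A) = f '' A := by
    rw [← image_neg_eq_neg, image_image]
    simp
  rw [sliceSet, h_image]
  ext x
  simp [sliceSet]

lemma IsSlice.neg (hS : IsSlice A S) : IsSlice (-A) (-S) := by
  obtain ⟨hne, f, hf, ε, hε, rfl⟩ := hS
  exact ⟨hne.neg, -f, neg_ne_zero.mpr hf, ε, hε, (sliceSet_neg_neg A f ε).symm⟩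

lemma IsSlice.subset (hS : IsSlice A S) : S ⊆ A := by
  obtain ⟨-, f, -, ε, -, rfl⟩ := hS
  exact sep_subset A _

lemma IsSlice.convex (hS : IsSlice A S) (hA : Convex ℝ A) : Convex ℝ S := by
  obtain ⟨-, f, -, ε, -, rfl⟩ := hS
  exact hA.inter (convex_halfSpace_gt f.toLinearMap.isLinear _)

lemma isSCD_of_countable_slices {ι : Type*} [Countable ι] [Nonempty ι] {V : ι → Set X}
    (hV : ∀ i, IsSlice A (V i))
    (hdet : ∀ B : Set X, (∀ i, (B ∩ V i).Nonempty) → A ⊆ closure (convexHull ℝ B)) :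
    IsSCD A := by
  obtain ⟨e, he⟩ := exists_surjective_nat ι
  exact ⟨V ∘ e, fun n ↦ hV (e n), fun B hB ↦ hdet B (he.forall.mpr hB)⟩

end Slices

theorem isSCD_of_isASCD_balanced_general {U : Set X} (hUc : Convex ℝ U) (hUbal : Balanced ℝ U)
    (hA : IsASCD U) : IsSCD U := by
  obtain ⟨V, hV, hdet⟩ := hA
  have hV_neg : ∀ n, IsSlice U (-V n) := fun n ↦ by simpa only [hUbal.neg_eq] using (hV n).neg
  refine isSCD_of_countable_slices (V := Sum.elim V fun n ↦ -V n) (Sum.forall.mpr ⟨hV, hV_neg⟩) ?_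
  intro B hB
  obtain ⟨hB_pos, hB_neg⟩ := Sum.forall.mp hB
  exact subset_closure_convexHull_of_inter_neg_nonempty (fun n ↦ (hV n).subset)
    (fun n ↦ (hV n).convex hUc) hdet hB_pos hB_neg

theorem isSCD_of_isASCD_balanced
    {X : Type*} [NormedAddCommGroup X] [NormedSpace ℝ X] [CompleteSpace X]
    (U : Set X) (hUc : Convex ℝ U) (hUcl : IsClosed U) (hUb : IsBounded U)
    (hUbal : Balanced ℝ U) (hA : IsASCD U) :
    IsSCD U :=
  isSCD_of_isASCD_balanced_general hUc hUbal hA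
end
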